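/- For every (t,x) ∈ [0,T)×ℝ and every s ∈ (0, T-t], the law of the random variable X^{t,x}_s is the Gaussian measure on ℝ with mean ν(t,x,t+s) and variance γ²(t,t+s). -/

import Mathlib

/-!
The equation is linear with additive noise, so it can be solved path by path. With
`g u = exp (-∫_u^s θ(t+r) dr)`, the process `Y = X - W` is differentiable in time and
`(g Y)' = g θ (α - W)`; integrating gives
`X_s = ν(t,x,t+s) + (W_s - ∫₀ˢ g'(u) W_u du)` (`linear_path_solution`).

The bracket is the Wiener integral `∫₀ˢ g dW` after integration by parts. Summation by parts
exhibits it as the almost sure limit of the sums `∑ g(uᵢ) (W_{uᵢ₊₁} - W_{uᵢ})` over uniform grids.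
These are centred Gaussian with variance `∑ g(uᵢ)² (uᵢ₊₁ - uᵢ)` by independence of the increments
(`law_incr_sum`), and the variances converge to `∫₀ˢ g²`. Comparing the limits of the
characteristic functions shows that the bracket is centred Gaussian with variance `∫₀ˢ g²`
(`law_wiener_integral`), which is `γ²(t,t+s)` after a translation of the time variable.
-/

open MeasureTheory ProbabilityTheory Set

/-- The mean function `ν(t₁,x,t₂)` of the time-dependent OU process. -/
noncomputable def nuOU (θ α : ℝ → ℝ) (t₁ x t₂ : ℝ) : ℝ :=
  Real.exp (-(∫ r in t₁..t₂, θ r)) * x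
    + ∫ r in t₁..t₂, Real.exp (-(∫ s in r..t₂, θ s)) * (θ r * α r)

/-- The variance function `γ²(t₁,t₂)` of the time-dependent OU process. -/
noncomputable def gammaSqOU (θ : ℝ → ℝ) (t₁ t₂ : ℝ) : ℝ :=
  ∫ r in t₁..t₂, Real.exp (-(2 * ∫ s in r..t₂, θ s))

/-- A standard Brownian motion on `[0,∞)`: strongly measurable coordinates, starts at `0`,
a.s. continuous paths, Gaussian increments `W_t − W_s ∼ N(0, t−s)`, and increments
independent of the past. -/
structure IsBrownianMotion {Ω : Type*} [MeasurableSpace Ω] (P : Measure Ω)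
    (W : ℝ → Ω → ℝ) : Prop where
  stronglyMeasurable : ∀ s : ℝ, StronglyMeasurable (W s)
  init : ∀ ω, W 0 ω = 0
  cont : ∀ᵐ ω ∂P, Continuous fun s => W s ω
  gaussian_incr : ∀ s t : ℝ, 0 ≤ s → s ≤ t →
    P.map (fun ω => W t ω - W s ω) = gaussianReal 0 (Real.toNNReal (t - s))
  indep_incr : ∀ s t : ℝ, 0 ≤ s → s ≤ t →
    Indep (MeasurableSpace.comap (fun ω => W t ω - W s ω) inferInstance)
      (⨆ u ∈ Set.Iic s, MeasurableSpace.comap (W u) inferInstance) P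

open Filter Topology

/-! ### Riemann sums and continuous extension -/

lemma exists_continuous_extension {f : ℝ → ℝ} {a b : ℝ} (hab : a ≤ b)
    (hf : ContinuousOn f (Icc a b)) :
    ∃ F : ℝ → ℝ, Continuous F ∧ ∀ x ∈ Icc a b, F x = f x := by
  refine ⟨IccExtend hab ((Icc a b).domRestrict f), ?_, ?_⟩
  · exact (continuousOn_iff_continuous_domRestrict.1 hf).Icc_extend'
  · intro x hx
    rw [IccExtend_of_mem hab _ hx]
    rfl

/-- The `i`-th point of the uniform grid on `[0,s]` with `n + 1` cells. -/
noncomputable def gridPt (s : ℝ) (n i : ℕ) : ℝ := s * i / (n + 1)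

lemma gridPt_zero (s : ℝ) (n : ℕ) : gridPt s n 0 = 0 := by simp [gridPt]

lemma gridPt_last (s : ℝ) (n : ℕ) : gridPt s n (n + 1) = s := by
  have : (n : ℝ) + 1 ≠ 0 := by positivity
  simp only [gridPt]; push_cast; field_simp

lemma gridPt_mono {s : ℝ} (hs : 0 ≤ s) (n : ℕ) : Monotone (gridPt s n) := by
  intro i j h
  have : (i : ℝ) ≤ j := by exact_mod_cast h
  unfold gridPt
  gcongr

lemma gridPt_step (s : ℝ) (n i : ℕ) : gridPt s n (i + 1) - gridPt s n i = s / (n + 1) := by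
  simp only [gridPt]; push_cast; ring

/-- Riemann–Stieltjes sums with integrator `k(u) du` converge, for any choice of tags in the
cells of the uniform grids. -/
lemma tendsto_riemann_sum {f k : ℝ → ℝ} (hf : Continuous f) (hk : Continuous k) {s : ℝ}
    (hs : 0 ≤ s) (ξ : ℕ → ℕ → ℝ)
    (hξ : ∀ n i, ξ n i ∈ Icc (gridPt s n i) (gridPt s n (i + 1))) :
    Tendsto (fun n : ℕ => ∑ i ∈ Finset.range (n + 1),
      f (ξ n i) * ∫ u in gridPt s n i..gridPt s n (i + 1), k u) atTop
      (𝓝 (∫ u in (0 : ℝ)..s, f u * k u)) := by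
  have hK : 0 ≤ ∫ u in (0 : ℝ)..s, |k u| :=
    intervalIntegral.integral_nonneg hs fun u _ => abs_nonneg _
  have huc : UniformContinuousOn f (Icc 0 s) :=
    isCompact_Icc.uniformContinuousOn_of_continuous hf.continuousOn
  rw [Metric.tendsto_atTop]
  intro ε hε
  set K := ∫ u in (0 : ℝ)..s, |k u| with hKdef
  obtain ⟨δ, hδ, hfδ⟩ := Metric.uniformContinuousOn_iff.1 huc (ε / (K + 1)) (by positivity)
  obtain ⟨N, hN⟩ := exists_nat_gt (s / δ)
  refine ⟨N, fun n hn => ?_⟩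
  have hstep : s / ((n : ℝ) + 1) < δ := by
    rw [div_lt_iff₀ (by positivity)]
    rw [div_lt_iff₀ hδ] at hN
    have : (N : ℝ) ≤ n := by exact_mod_cast hn
    nlinarith
  have hmono := gridPt_mono hs n
  have hsum : ∀ h : ℝ → ℝ, Continuous h →
      ∑ i ∈ Finset.range (n + 1), ∫ u in gridPt s n i..gridPt s n (i + 1), h u
        = ∫ u in (0 : ℝ)..s, h u := by
    intro h hh
    rw [intervalIntegral.sum_integral_adjacent_intervals
      (fun i _ => hh.intervalIntegrable _ _), gridPt_zero, gridPt_last]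
  rw [Real.dist_eq, ← hsum (fun u => f u * k u) (hf.mul hk), ← Finset.sum_sub_distrib]
  calc |∑ i ∈ Finset.range (n + 1),
          (f (ξ n i) * (∫ u in gridPt s n i..gridPt s n (i + 1), k u)
            - ∫ u in gridPt s n i..gridPt s n (i + 1), f u * k u)|
      ≤ ∑ i ∈ Finset.range (n + 1),
          |f (ξ n i) * (∫ u in gridPt s n i..gridPt s n (i + 1), k u)
            - ∫ u in gridPt s n i..gridPt s n (i + 1), f u * k u| :=
        Finset.abs_sum_le_sum_abs _ _
    _ ≤ ∑ i ∈ Finset.range (n + 1),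
          ∫ u in gridPt s n i..gridPt s n (i + 1), ε / (K + 1) * |k u| := by
        refine Finset.sum_le_sum fun i hi => ?_
        have hle : gridPt s n i ≤ gridPt s n (i + 1) := hmono (Nat.le_succ i)
        have h0 : 0 ≤ gridPt s n i := by
          rw [← gridPt_zero s n]; exact hmono (Nat.zero_le i)
        have h1 : gridPt s n (i + 1) ≤ s := by
          have := hmono (Nat.succ_le_of_lt (Finset.mem_range.1 hi))
          rwa [gridPt_last] at this
        rw [← intervalIntegral.integral_const_mul, ← intervalIntegral.integral_sub
          (f := fun u => f (ξ n i) * k u) (g := fun u => f u * k u)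
          ((continuous_const.mul hk).intervalIntegrable _ _)
          ((hf.mul hk).intervalIntegrable _ _), ← Real.norm_eq_abs]
        refine intervalIntegral.norm_integral_le_of_norm_le hle (ae_of_all _ ?_)
          ((continuous_const.mul hk.abs).intervalIntegrable _ _)
        intro u hu
        have hξi := hξ n i
        have hd : dist (ξ n i) u < δ := by
          rw [Real.dist_eq]
          refine lt_of_le_of_lt ?_ hstep
          rw [← gridPt_step s n i, abs_le]
          constructor <;> linarith [hξi.1, hξi.2, hu.1, hu.2]
        have := hfδ (ξ n i) ⟨h0.trans hξi.1, hξi.2.trans h1⟩ u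
          ⟨h0.trans hu.1.le, hu.2.trans h1⟩ hd
        rw [Real.dist_eq] at this
        rw [← sub_mul, norm_mul, Real.norm_eq_abs, Real.norm_eq_abs]
        exact mul_le_mul_of_nonneg_right this.le (abs_nonneg _)
    _ = ε / (K + 1) * K := by
        rw [hsum (fun u => ε / (K + 1) * |k u|) (continuous_const.mul hk.abs),
          intervalIntegral.integral_const_mul]
    _ < ε := by
        rw [div_mul_eq_mul_div, div_lt_iff₀ (by positivity)]
        nlinarith

/-! ### Gaussian law of the Wiener integral -/

/-- Weighted sums of Brownian increments are measurable with respect to the past of the last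
time point; this is what makes the next increment independent of the sum. -/
lemma measurable_incr_sum {Ω : Type*} (W : ℝ → Ω → ℝ) (u c : ℕ → ℝ) (hu : Monotone u) (n : ℕ) :
    Measurable[⨆ r ∈ Set.Iic (u n), MeasurableSpace.comap (W r) inferInstance]
      (fun ω => ∑ i ∈ Finset.range n, c i * (W (u (i + 1)) ω - W (u i) ω)) := by
  have hW : ∀ i ≤ n,
      Measurable[⨆ r ∈ Set.Iic (u n), MeasurableSpace.comap (W r) inferInstance] (W (u i)) := by
    intro i hi
    refine Measurable.mono (comap_measurable (W (u i))) ?_ le_rfl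
    exact le_iSup₂_of_le (u i) (hu hi) le_rfl
  refine Finset.measurable_fun_sum _ fun i hi => ?_
  have hi' := Finset.mem_range.1 hi
  exact ((hW (i + 1) hi').sub (hW i hi'.le)).const_mul (c i)

lemma law_incr_sum {Ω : Type*} [MeasurableSpace Ω] {P : Measure Ω} [IsProbabilityMeasure P]
    {W : ℝ → Ω → ℝ} (hW : IsBrownianMotion P W) (u c : ℕ → ℝ) (hu : Monotone u) (hu0 : 0 ≤ u 0)
    (n : ℕ) :
    P.map (fun ω => ∑ i ∈ Finset.range n, c i * (W (u (i + 1)) ω - W (u i) ω))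
      = gaussianReal 0 (Real.toNNReal (∑ i ∈ Finset.range n, c i ^ 2 * (u (i + 1) - u i))) := by
  induction n with
  | zero =>
    simp [gaussianReal_zero_var, Measure.map_const]
  | succ n ih =>
    have hle : u n ≤ u (n + 1) := hu (Nat.le_succ n)
    have hn0 : 0 ≤ u n := hu0.trans (hu (Nat.zero_le n))
    have hmeas : Measurable fun ω => W (u (n + 1)) ω - W (u n) ω :=
      (hW.stronglyMeasurable _).measurable.sub (hW.stronglyMeasurable _).measurable
    have hincr : P.map (fun ω => c n * (W (u (n + 1)) ω - W (u n) ω))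
        = gaussianReal 0 (Real.toNNReal (c n ^ 2 * (u (n + 1) - u n))) := by
      have := (gaussianReal_const_mul
        (⟨hmeas.aemeasurable, hW.gaussian_incr (u n) (u (n + 1)) hn0 hle⟩ :
          HasLaw _ (gaussianReal 0 (Real.toNNReal (u (n + 1) - u n))) P) (c n)).map_eq
      rw [this, mul_zero]
      congr 1
      ext
      simp only [NNReal.coe_mul, NNReal.coe_mk]
      rw [Real.coe_toNNReal _ (sub_nonneg.2 hle),
        Real.coe_toNNReal _ (mul_nonneg (sq_nonneg _) (sub_nonneg.2 hle))]
    have hind : IndepFun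
        (fun ω => ∑ i ∈ Finset.range n, c i * (W (u (i + 1)) ω - W (u i) ω))
        (fun ω => c n * (W (u (n + 1)) ω - W (u n) ω)) P := by
      have h1 : IndepFun
          (fun ω => ∑ i ∈ Finset.range n, c i * (W (u (i + 1)) ω - W (u i) ω))
          (fun ω => W (u (n + 1)) ω - W (u n) ω) P := by
        rw [IndepFun_iff_Indep]
        exact indep_of_indep_of_le_left (hW.indep_incr (u n) (u (n + 1)) hn0 hle).symm
          (measurable_incr_sum W u c hu n).comap_le
      exact h1.comp measurable_id (measurable_const_mul (c n))
    have hadd := gaussianReal_add_gaussianReal_of_indepFun hind ih hincr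
    simp only [Finset.sum_range_succ]
    rw [Real.toNNReal_add
      (Finset.sum_nonneg fun i _ => mul_nonneg (sq_nonneg _) (sub_nonneg.2 (hu (Nat.le_succ i))))
      (mul_nonneg (sq_nonneg _) (sub_nonneg.2 hle))]
    rw [zero_add] at hadd
    exact hadd

/-- An almost sure limit of centred Gaussian variables with convergent variances is centred
Gaussian with the limiting variance. -/
lemma law_of_tendsto_gaussian {Ω : Type*} [MeasurableSpace Ω] {P : Measure Ω}
    [IsProbabilityMeasure P] {S : ℕ → Ω → ℝ} {Z : Ω → ℝ} {v : ℕ → ℝ} {w : ℝ}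
    (hS : ∀ n, Measurable (S n)) (hZ : Measurable Z)
    (hlaw : ∀ n, P.map (S n) = gaussianReal 0 (Real.toNNReal (v n)))
    (hlim : ∀ᵐ ω ∂P, Tendsto (fun n => S n ω) atTop (𝓝 (Z ω)))
    (hv : Tendsto v atTop (𝓝 w)) :
    P.map Z = gaussianReal 0 (Real.toNNReal w) := by
  have : IsProbabilityMeasure (P.map Z) := Measure.isProbabilityMeasure_map hZ.aemeasurable
  refine Measure.ext_of_charFun (funext fun ξ => ?_)
  have hchar : ∀ Y : Ω → ℝ, Measurable Y →
      charFun (P.map Y) ξ = ∫ ω, Complex.exp (ξ * Y ω * Complex.I) ∂P := by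
    intro Y hY
    rw [charFun_apply_real, integral_map hY.aemeasurable]
    exact Continuous.aestronglyMeasurable (by fun_prop)
  have h1 : Tendsto (fun n => charFun (P.map (S n)) ξ) atTop (𝓝 (charFun (P.map Z) ξ)) := by
    simp_rw [hchar _ (hS _), hchar _ hZ]
    refine tendsto_integral_of_dominated_convergence (fun _ => (1 : ℝ)) ?_
      (integrable_const _) ?_ ?_
    · intro n
      have := hS n
      exact Measurable.aestronglyMeasurable (by fun_prop)
    · intro n
      refine ae_of_all _ fun ω => ?_
      rw [← Complex.ofReal_mul, Complex.norm_exp_ofReal_mul_I]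
    · filter_upwards [hlim] with ω hω
      have hc : Continuous fun y : ℝ => Complex.exp (ξ * y * Complex.I) := by fun_prop
      exact (hc.tendsto (Z ω)).comp hω
  have h2 : Tendsto (fun n => charFun (P.map (S n)) ξ) atTop
      (𝓝 (charFun (gaussianReal 0 (Real.toNNReal w)) ξ)) := by
    simp_rw [hlaw, charFun_gaussianReal]
    have hc : Continuous fun y : ℝ => Complex.exp (ξ * (0 : ℝ) * Complex.I
        - ((Real.toNNReal y : ℝ) : ℂ) * ξ ^ 2 / 2) := by
      have := NNReal.continuous_coe.comp continuous_real_toNNReal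
      have h3 : Continuous fun y : ℝ => ((Real.toNNReal y : ℝ) : ℂ) :=
        Complex.continuous_ofReal.comp this
      fun_prop
    exact (hc.tendsto w).comp hv
  exact tendsto_nhds_unique h1 h2

lemma sum_by_parts (c w : ℕ → ℝ) (hw : w 0 = 0) (n : ℕ) :
    ∑ i ∈ Finset.range n, c i * (w (i + 1) - w i)
      = c n * w n - ∑ i ∈ Finset.range n, w (i + 1) * (c (i + 1) - c i) := by
  induction n with
  | zero => simp [hw]
  | succ n ih => rw [Finset.sum_range_succ, Finset.sum_range_succ, ih]; ring

/-- The Wiener integral `∫₀ˢ g dW`, written as `g(s) W_s - ∫₀ˢ g'(u) W_u du`, is centred Gaussian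
with variance `∫₀ˢ g²`. -/
lemma law_wiener_integral {Ω : Type*} [MeasurableSpace Ω] {P : Measure Ω}
    [IsProbabilityMeasure P] {W : ℝ → Ω → ℝ} (hW : IsBrownianMotion P W)
    {g g' : ℝ → ℝ} (hg : ∀ u, HasDerivAt g (g' u) u) (hg' : Continuous g')
    {s : ℝ} (hs : 0 ≤ s) {Z : Ω → ℝ} (hZ : Measurable Z)
    (hZeq : ∀ᵐ ω ∂P, Z ω = g s * W s ω - ∫ u in (0 : ℝ)..s, W u ω * g' u) :
    P.map Z = gaussianReal 0 (Real.toNNReal (∫ u in (0 : ℝ)..s, g u ^ 2)) := by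
  have hgc : Continuous g := continuous_iff_continuousAt.2 fun u => (hg u).continuousAt
  refine law_of_tendsto_gaussian
    (S := fun n ω => ∑ i ∈ Finset.range (n + 1),
      g (gridPt s n i) * (W (gridPt s n (i + 1)) ω - W (gridPt s n i) ω))
    (v := fun n => ∑ i ∈ Finset.range (n + 1),
      g (gridPt s n i) ^ 2 * (gridPt s n (i + 1) - gridPt s n i)) ?_ hZ ?_ ?_ ?_
  · intro n
    refine Finset.measurable_fun_sum _ fun i _ => ?_
    exact ((hW.stronglyMeasurable _).measurable.sub
      (hW.stronglyMeasurable _).measurable).const_mul _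
  · intro n
    exact law_incr_sum hW (gridPt s n) (fun i => g (gridPt s n i)) (gridPt_mono hs n)
      (gridPt_zero s n).ge (n + 1)
  · filter_upwards [hZeq, hW.cont] with ω hω hc
    rw [hω]
    have hsum : ∀ n : ℕ, ∑ i ∈ Finset.range (n + 1),
        g (gridPt s n i) * (W (gridPt s n (i + 1)) ω - W (gridPt s n i) ω)
        = g s * W s ω - ∑ i ∈ Finset.range (n + 1), W (gridPt s n (i + 1)) ω *
            ∫ u in gridPt s n i..gridPt s n (i + 1), g' u := by
      intro n
      rw [sum_by_parts (fun i => g (gridPt s n i)) (fun i => W (gridPt s n i) ω)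
        (by rw [gridPt_zero, hW.init]), gridPt_last]
      congr 1
      refine Finset.sum_congr rfl fun i _ => ?_
      rw [intervalIntegral.integral_eq_sub_of_hasDerivAt (fun u _ => hg u)
        (hg'.intervalIntegrable _ _)]
    simp_rw [hsum]
    refine tendsto_const_nhds.sub ?_
    exact tendsto_riemann_sum hc hg' hs (fun n i => gridPt s n (i + 1))
      fun n i => ⟨gridPt_mono hs n (Nat.le_succ i), le_rfl⟩
  · have := tendsto_riemann_sum (hgc.pow 2) (continuous_const (y := (1 : ℝ))) hs
      (fun n i => gridPt s n i) fun n i => ⟨le_rfl, gridPt_mono hs n (Nat.le_succ i)⟩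
    simpa using this

/-! ### Pathwise solution of the linear equation -/

/-- The kernel `exp (∫_s^u a)`, i.e. `exp (-∫_u^s a)`, solves `g' = g a`. -/
lemma hasDerivAt_expKernel {a : ℝ → ℝ} (ha : Continuous a) (s u : ℝ) :
    HasDerivAt (fun u => Real.exp (∫ r in s..u, a r))
      (Real.exp (∫ r in s..u, a r) * a u) u :=
  (ha.integral_hasStrictDerivAt s u).hasDerivAt.exp

/-- Variation of constants for `X = x + ∫ a (b - X) + w` with a continuous driving path `w`. -/
lemma linear_path_solution {a b w X : ℝ → ℝ} (ha : Continuous a) (hb : Continuous b)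
    (hw : Continuous w) {S x : ℝ} (hS : 0 ≤ S) (hX : ContinuousOn X (Icc 0 S))
    (heq : ∀ s ∈ Icc 0 S, X s = x + (∫ u in (0 : ℝ)..s, a u * (b u - X u)) + w s)
    {s : ℝ} (hs : s ∈ Icc 0 S) :
    X s = (Real.exp (∫ r in s..0, a r) * x
        + ∫ u in (0 : ℝ)..s, Real.exp (∫ r in s..u, a r) * (a u * b u))
      + (w s - ∫ u in (0 : ℝ)..s, w u * (Real.exp (∫ r in s..u, a r) * a u)) := by
  obtain ⟨Y, hY, hYX⟩ := exists_continuous_extension hS hX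
  set g : ℝ → ℝ := fun u => Real.exp (∫ r in s..u, a r) with hg
  have hgd : ∀ u, HasDerivAt g (g u * a u) u := hasDerivAt_expKernel ha s
  have hgc : Continuous g := continuous_iff_continuousAt.2 fun u => (hgd u).continuousAt
  have hcoef : Continuous fun u => a u * (b u - Y u) := ha.mul (hb.sub hY)
  set F : ℝ → ℝ := fun v => x + ∫ u in (0 : ℝ)..v, a u * (b u - Y u) with hF
  have hFd : ∀ u, HasDerivAt F (a u * (b u - Y u)) u := fun u =>
    ((hcoef.integral_hasStrictDerivAt 0 u).hasDerivAt).const_add x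
  have hFc : Continuous F := continuous_iff_continuousAt.2 fun u => (hFd u).continuousAt
  have hXF : ∀ v ∈ Icc 0 S, X v = F v + w v := by
    intro v hv
    rw [heq v hv]
    congr 2
    refine intervalIntegral.integral_congr fun u hu => ?_
    rw [uIcc_of_le hv.1] at hu
    rw [hYX u ⟨hu.1, hu.2.trans hv.2⟩]
  have hint := intervalIntegral.integral_eq_sub_of_hasDerivAt (a := 0) (b := s)
    (fun u _ => (hgd u).mul (hFd u))
    (((((hgc.mul ha).mul hFc).add (hgc.mul hcoef))).intervalIntegrable 0 s)
  have hint2 : (∫ u in (0 : ℝ)..s, (g u * a u * F u + g u * (a u * (b u - Y u))))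
      = (∫ u in (0 : ℝ)..s, g u * (a u * b u)) - ∫ u in (0 : ℝ)..s, w u * (g u * a u) := by
    rw [← intervalIntegral.integral_sub (f := fun u => g u * (a u * b u))
      (g := fun u => w u * (g u * a u)) ((hgc.mul (ha.mul hb)).intervalIntegrable _ _)
      ((hw.mul (hgc.mul ha)).intervalIntegrable _ _)]
    refine intervalIntegral.integral_congr fun u hu => ?_
    rw [uIcc_of_le hs.1] at hu
    have huS : u ∈ Icc 0 S := ⟨hu.1, hu.2.trans hs.2⟩
    rw [hYX u huS, hXF u huS]
    ring
  have hgs : g s = 1 := by simp [hg]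
  have hF0 : F 0 = x := by simp [hF]
  have hkey := hint2.symm.trans hint
  simp only [Pi.mul_apply, hgs, hF0, one_mul] at hkey
  rw [hXF s hs]
  change F s + w s = (g 0 * x + _) + _
  linarith

/-- For every `(t,x) ∈ [0,T)×ℝ` and `s ∈ (0, T−t]`, the law of `X^{t,x}_s`
is the Gaussian measure on `ℝ` with mean `ν(t,x,t+s)` and variance `γ²(t,t+s)`. -/
theorem stmt_8 {Ω : Type*} [MeasurableSpace Ω] (P : Measure Ω) [IsProbabilityMeasure P]
    (W : ℝ → Ω → ℝ) (hW : IsBrownianMotion P W)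
    (T : ℝ) (hT : 0 < T) (θ α : ℝ → ℝ)
    (hθ : ContDiffOn ℝ 1 θ (Icc 0 T)) (hα : ContDiffOn ℝ 1 α (Icc 0 T))
    (hθpos : ∀ s ∈ Icc (0:ℝ) T, 0 < θ s)
    (X : ℝ → ℝ → ℝ → Ω → ℝ)
    (hXmeas : ∀ t x s, Measurable (X t x s))
    (hX : ∀ t ∈ Icc (0:ℝ) T, ∀ x : ℝ, ∀ᵐ ω ∂P,
      ContinuousOn (fun s => X t x s ω) (Icc 0 (T - t)) ∧
      ∀ s ∈ Icc (0:ℝ) (T - t),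
        X t x s ω = x + (∫ u in (0:ℝ)..s, θ (t + u) * (α (t + u) - X t x u ω)) + W s ω)
    :
    ∀ t ∈ Ico (0:ℝ) T, ∀ x : ℝ, ∀ s ∈ Ioc (0:ℝ) (T - t),
      P.map (X t x s)
        = gaussianReal (nuOU θ α t x (t + s)) (Real.toNNReal (gammaSqOU θ t (t + s))) := by
  intro t ht x s hs
  have hTt : 0 ≤ T - t := by linarith [ht.2]
  obtain ⟨θ', hθ'c, hθ'⟩ := exists_continuous_extension hT.le hθ.continuousOn
  obtain ⟨α', hα'c, hα'⟩ := exists_continuous_extension hT.le hα.continuousOn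
  set a : ℝ → ℝ := fun u => θ' (t + u) with ha
  set b : ℝ → ℝ := fun u => α' (t + u) with hb
  have hac : Continuous a := hθ'c.comp (continuous_const_add t)
  have hbc : Continuous b := hα'c.comp (continuous_const_add t)
  have hmem : ∀ u ∈ Icc 0 (T - t), t + u ∈ Icc 0 T := fun u hu =>
    ⟨add_nonneg ht.1 hu.1, by linarith [hu.2]⟩
  have haθ : ∀ u ∈ Icc 0 (T - t), a u = θ (t + u) := fun u hu => hθ' _ (hmem u hu)
  have hbα : ∀ u ∈ Icc 0 (T - t), b u = α (t + u) := fun u hu => hα' _ (hmem u hu)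
  have hsmem : s ∈ Icc 0 (T - t) := ⟨hs.1.le, hs.2⟩
  set g : ℝ → ℝ := fun u => Real.exp (∫ r in s..u, a r) with hg
  have hker : ∀ u ∈ Icc 0 s, (∫ r in s..u, a r) = -∫ r in (t + u)..(t + s), θ r := by
    intro u hu
    rw [intervalIntegral.integral_symm, ← intervalIntegral.integral_comp_add_left]
    congr 1
    refine intervalIntegral.integral_congr fun r hr => ?_
    rw [uIcc_of_le hu.2] at hr
    exact haθ r ⟨hu.1.trans hr.1, hr.2.trans hs.2⟩
  have hν : nuOU θ α t x (t + s)
      = g 0 * x + ∫ u in (0 : ℝ)..s, g u * (a u * b u) := by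
    have h0 := hker 0 ⟨le_rfl, hs.1.le⟩
    rw [add_zero] at h0
    have hshift := intervalIntegral.integral_comp_add_left (a := 0) (b := s)
      (fun r => Real.exp (-(∫ q in r..(t + s), θ q)) * (θ r * α r)) t
    rw [add_zero] at hshift
    unfold nuOU
    rw [← hshift, hg]
    simp only [h0]
    congr 1
    refine intervalIntegral.integral_congr fun u hu => ?_
    rw [uIcc_of_le hs.1.le] at hu
    have huS : u ∈ Icc 0 (T - t) := ⟨hu.1, hu.2.trans hs.2⟩
    rw [hker u hu, haθ u huS, hbα u huS]
  have hγ : gammaSqOU θ t (t + s) = ∫ u in (0 : ℝ)..s, g u ^ 2 := by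
    have hshift := intervalIntegral.integral_comp_add_left (a := 0) (b := s)
      (fun r => Real.exp (-(2 * ∫ q in r..(t + s), θ q))) t
    rw [add_zero] at hshift
    unfold gammaSqOU
    rw [← hshift]
    refine intervalIntegral.integral_congr fun u hu => ?_
    rw [uIcc_of_le hs.1.le] at hu
    simp only [hg]
    rw [hker u hu, ← Real.exp_nat_mul]
    congr 1
    push_cast
    ring
  have hgd : ∀ u, HasDerivAt g (g u * a u) u := hasDerivAt_expKernel hac s
  have hgc : Continuous g := continuous_iff_continuousAt.2 fun u => (hgd u).continuousAt
  have hlaw : P.map (fun ω => X t x s ω - nuOU θ α t x (t + s))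
      = gaussianReal 0 (Real.toNNReal (∫ u in (0 : ℝ)..s, g u ^ 2)) := by
    refine law_wiener_integral hW hgd (hgc.mul hac) hs.1.le ((hXmeas t x s).sub_const _) ?_
    filter_upwards [hX t ⟨ht.1, ht.2.le⟩ x, hW.cont] with ω hω hc
    have hsol := linear_path_solution (a := a) (b := b) (w := fun u => W u ω)
      (X := fun u => X t x u ω) (x := x) hac hbc hc hTt hω.1 ?_ hsmem
    · have hgs : g s = 1 := by simp [hg]
      rw [hν, hgs, one_mul]
      rw [hsol]
      simp only [hg]
      ring
    · intro v hv
      rw [hω.2 v hv]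
      congr 2
      refine intervalIntegral.integral_congr fun u hu => ?_
      rw [uIcc_of_le hv.1] at hu
      have huS : u ∈ Icc 0 (T - t) := ⟨hu.1, hu.2.trans hv.2⟩
      rw [haθ u huS, hbα u huS]
  have hfin := (gaussianReal_add_const
    (⟨((hXmeas t x s).sub_const _).aemeasurable, hlaw⟩ :
      HasLaw _ (gaussianReal 0 (Real.toNNReal (∫ u in (0 : ℝ)..s, g u ^ 2))) P)
    (nuOU θ α t x (t + s))).map_eq
  rw [hγ]
  simpa using hfin
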